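/- Entropy balance of one engine cycle (Eq. (49) of the paper): Let ρ_W and ρ_S be density matrices on ℂ^{d_W} and ℂ^{d_S}, let ψ ∈ ℂ^{d_D} be a unit vector, let G be a unitary on ℂ^{d_W} ⊗ ℂ^{d_S} ⊗ ℂ^{d_D}, and let {P_x}_{x∈X} be a complete orthogonal family of projections on ℂ^{d_D}. Define σ := ∑_{x∈X} (1 ⊗ 1 ⊗ P_x) G (ρ_W ⊗ ρ_S ⊗ |ψ⟩⟨ψ|) G† (1 ⊗ 1 ⊗ P_x), and let ρ'_W, ρ'_S, ρ'_D be its three marginal states (partial traces over the other two factors). Then S(ρ_W) + S(ρ_S) ≤ S(ρ'_W) + S(ρ'_S) + S(ρ'_D). -/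

import Mathlib

open Matrix
open scoped Kronecker Matrix ComplexOrder

noncomputable section

/-- A density matrix: positive semidefinite with unit trace. -/
def IsDensityMatrix {n : Type*} [Fintype n] (ρ : Matrix n n ℂ) : Prop :=
  ρ.PosSemidef ∧ ρ.trace = 1

/-- von Neumann entropy `S(ρ) = -∑ λᵢ log λᵢ` (junk value 0 if not Hermitian). -/
noncomputable def vnEntropy {n : Type*} [Fintype n] [DecidableEq n]
    (ρ : Matrix n n ℂ) : ℝ :=
  if h : ρ.IsHermitian then -∑ i, (h.eigenvalues i) * Real.log (h.eigenvalues i) else 0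

/-- Non-equilibrium free energy `F(ρ) = tr(Hρ) - kT S(ρ)`. -/
noncomputable def freeEnergy {n : Type*} [Fintype n] [DecidableEq n]
    (kT : ℝ) (H ρ : Matrix n n ℂ) : ℝ :=
  (Matrix.trace (H * ρ)).re - kT * vnEntropy ρ

/-- Least eigenvalue of a Hermitian matrix (junk value 0 if not Hermitian). -/
noncomputable def lambdaMin {n : Type*} [Fintype n] [DecidableEq n]
    (H : Matrix n n ℂ) : ℝ :=
  if h : H.IsHermitian then ⨅ i, h.eigenvalues i else 0

/-- Partial trace over the second tensor factor. -/
def ptrace2 {m n : Type*} [Fintype n]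
    (σ : Matrix (m × n) (m × n) ℂ) : Matrix m m ℂ :=
  fun i j => ∑ k, σ (i, k) (j, k)

/-- Partial trace over the first tensor factor. -/
def ptrace1 {m n : Type*} [Fintype m]
    (σ : Matrix (m × n) (m × n) ℂ) : Matrix n n ℂ :=
  fun k l => ∑ i, σ (i, k) (i, l)

/-- Outer product `|v⟩⟨v|`. -/
def outer {n : Type*} (v : n → ℂ) : Matrix n n ℂ :=
  Matrix.vecMulVec v (star v)

/-- Kronecker product of vectors. -/
def kronVec {m n : Type*} (v : m → ℂ) (w : n → ℂ) : m × n → ℂ :=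
  fun p => v p.1 * w p.2

/-!
The cycle is the unital channel with Kraus operators `(1 ⊗ 1 ⊗ Pₓ) G` applied to the product state
`ρ_W ⊗ ρ_S ⊗ |ψ⟩⟨ψ|`, so additivity of the entropy on products, its monotonicity under unital
channels and two uses of subadditivity give the inequality. Both quantum inequalities reduce to
concavity of `-x log x`. Between eigenbases of input and output, a unital channel acts on spectra by
a doubly stochastic matrix, hence cannot decrease the entropy. For subadditivity, measure the state
in the product of the eigenbases of its two marginals: this can only raise the entropy, and the
outcome is a classical joint distribution whose marginals are the spectra of the two marginal
states, to which Shannon's subadditivity applies.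
-/

open Real (negMulLog negMulLog_mul negMulLog_zero negMulLog_nonneg concaveOn_negMulLog)

section ShannonEntropy

variable {α β : Type*} [Fintype α] [Fintype β]

lemma sum_negMulLog_le_sum_negMulLog_mulVec [DecidableEq α] {D : Matrix α α ℝ}
    (hD : D ∈ doublyStochastic ℝ α) {p : α → ℝ} (hp : ∀ i, 0 ≤ p i) :
    ∑ i, negMulLog (p i) ≤ ∑ i, negMulLog ((D *ᵥ p) i) := by
  have hjensen (i : α) : ∑ j, D i j * negMulLog (p j) ≤ negMulLog ((D *ᵥ p) i) :=
    concaveOn_negMulLog.le_map_sum (fun _ _ => nonneg_of_mem_doublyStochastic hD)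
      (sum_row_of_mem_doublyStochastic hD i) (fun j _ => hp j)
  calc ∑ j, negMulLog (p j) = ∑ j, ∑ i, D i j * negMulLog (p j) := by
        simp only [← Finset.sum_mul, sum_col_of_mem_doublyStochastic hD, one_mul]
    _ = ∑ i, ∑ j, D i j * negMulLog (p j) := Finset.sum_comm
    _ ≤ ∑ i, negMulLog ((D *ᵥ p) i) := Finset.sum_le_sum fun i _ => hjensen i

lemma sum_negMulLog_mul {p : α → ℝ} {q : β → ℝ} (hp : ∑ a, p a = 1) (hq : ∑ b, q b = 1) :
    ∑ ab : α × β, negMulLog (p ab.1 * q ab.2)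
      = ∑ a, negMulLog (p a) + ∑ b, negMulLog (q b) := by
  simp only [Fintype.sum_prod_type, negMulLog_mul, Finset.sum_add_distrib, ← Finset.mul_sum,
    ← Finset.sum_mul, hp, hq, one_mul]

lemma sum_negMulLog_le_add_marginals {p : α × β → ℝ} (hp : ∀ ab, 0 ≤ p ab)
    (hsum : ∑ ab, p ab = 1) :
    ∑ ab, negMulLog (p ab)
      ≤ ∑ a, negMulLog (∑ b, p (a, b)) + ∑ b, negMulLog (∑ a, p (a, b)) := by
  set r : β → ℝ := fun b => ∑ a, p (a, b)
  -- The conditional distribution of `a` given `b`; it is `0` by convention where `r b = 0`.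
  set c : α → β → ℝ := fun a b => p (a, b) / r b with hc
  have hr_nonneg (b : β) : 0 ≤ r b := Finset.sum_nonneg fun a _ => hp (a, b)
  have hr_sum : ∑ b, r b = 1 := by rw [← hsum, Fintype.sum_prod_type_right]
  have hp_eq (a : α) (b : β) : p (a, b) = r b * c a b := by
    by_cases hb : r b = 0
    · have := (Finset.sum_eq_zero_iff_of_nonneg fun a _ => hp (a, b)).1 hb a (Finset.mem_univ a)
      rw [this, hb, zero_mul]
    · rw [hc, mul_div_cancel₀ _ hb]
  have hc_sum (b : β) : (∑ a, c a b) * negMulLog (r b) = negMulLog (r b) := by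
    by_cases hb : r b = 0
    · rw [hb, negMulLog_zero, mul_zero]
    · rw [hc, ← Finset.sum_div, div_self hb, one_mul]
  have hjensen (a : α) : ∑ b, r b * negMulLog (c a b) ≤ negMulLog (∑ b, p (a, b)) := by
    simp only [hp_eq a]
    exact concaveOn_negMulLog.le_map_sum (fun b _ => hr_nonneg b) hr_sum
      (fun b _ => div_nonneg (hp (a, b)) (hr_nonneg b))
  calc ∑ ab, negMulLog (p ab)
      = ∑ a, ∑ b, r b * negMulLog (c a b) + ∑ a, ∑ b, c a b * negMulLog (r b) := by
        simp only [Fintype.sum_prod_type, hp_eq, negMulLog_mul, Finset.sum_add_distrib]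
        rw [add_comm]
    _ = ∑ a, ∑ b, r b * negMulLog (c a b) + ∑ b, negMulLog (r b) := by
        rw [Finset.sum_comm (f := fun a b => c a b * negMulLog (r b))]
        simp only [← Finset.sum_mul, hc_sum]
    _ ≤ ∑ a, negMulLog (∑ b, p (a, b)) + ∑ b, negMulLog (r b) := by
        gcongr with a
        exact hjensen a

end ShannonEntropy

section Diagonalization

variable {n : Type*} [Fintype n] [DecidableEq n] {A : Matrix n n ℂ}

lemma eigenvectorUnitary_conjTranspose_mul_mul (h : A.IsHermitian) :
    (h.eigenvectorUnitary : Matrix n n ℂ)ᴴ * A * h.eigenvectorUnitary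
      = diagonal fun i => (h.eigenvalues i : ℂ) :=
  (Unitary.conjStarAlgAut_star_apply ..).symm.trans h.conjStarAlgAut_star_eigenvectorUnitary

lemma eigenvectorUnitary_mul_diagonal_mul (h : A.IsHermitian) :
    h.eigenvectorUnitary * diagonal (fun i => (h.eigenvalues i : ℂ))
      * (h.eigenvectorUnitary : Matrix n n ℂ)ᴴ = A :=
  h.spectral_theorem.symm

lemma vnEntropy_eq_sum_negMulLog_eigenvalues (h : A.IsHermitian) :
    vnEntropy A = ∑ i, negMulLog (h.eigenvalues i) := by
  simp only [vnEntropy, dif_pos h, negMulLog, neg_mul, Finset.sum_neg_distrib]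

lemma vnEntropy_unitary_conj_diagonal {U : Matrix n n ℂ} (hU : U ∈ unitaryGroup n ℂ)
    (p : n → ℝ) :
    vnEntropy (U * diagonal (fun i => (p i : ℂ)) * Uᴴ) = ∑ i, negMulLog (p i) := by
  set A := U * diagonal (fun i => (p i : ℂ)) * Uᴴ with hA
  have hherm : A.IsHermitian :=
    isHermitian_mul_mul_conjTranspose U (isHermitian_diagonal_of_self_adjoint _ (by ext; simp))
  have hcharpoly : A.charpoly = ∏ i, (Polynomial.X - Polynomial.C (p i : ℂ)) := by
    rw [hA, charpoly_mul_comm, ← Matrix.mul_assoc, ← star_eq_conjTranspose,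
      mem_unitaryGroup_iff'.1 hU, Matrix.one_mul, charpoly_diagonal]
  have hroots : A.charpoly.roots = Finset.univ.val.map fun i => (p i : ℂ) := by
    rw [hcharpoly, Polynomial.roots_prod _ _ (Finset.prod_ne_zero_iff.2 fun i _ =>
      Polynomial.X_sub_C_ne_zero _)]
    simp only [Polynomial.roots_X_sub_C, Multiset.bind_singleton]
  rw [hherm.roots_charpoly_eq_eigenvalues] at hroots
  have := congrArg (fun s => (s.map fun z : ℂ => negMulLog z.re).sum) hroots
  simpa [vnEntropy_eq_sum_negMulLog_eigenvalues hherm] using this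

end Diagonalization

section DensityMatrix

variable {m n : Type*} [Fintype m] [Fintype n]

lemma IsDensityMatrix.kronecker {ρ : Matrix m m ℂ} {τ : Matrix n n ℂ} (hρ : IsDensityMatrix ρ)
    (hτ : IsDensityMatrix τ) : IsDensityMatrix (ρ ⊗ₖ τ) :=
  ⟨hρ.1.kronecker hτ.1, by rw [trace_kronecker, hρ.2, hτ.2, one_mul]⟩

lemma isDensityMatrix_outer {ψ : n → ℂ} (hψ : star ψ ⬝ᵥ ψ = 1) : IsDensityMatrix (outer ψ) :=
  ⟨posSemidef_vecMulVec_self_star ψ, by rw [outer, trace_vecMulVec, dotProduct_comm, hψ]⟩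

lemma isDensityMatrix_ptrace1 {σ : Matrix (m × n) (m × n) ℂ} (hσ : IsDensityMatrix σ) :
    IsDensityMatrix (ptrace1 σ) where
  left := by
    have : ptrace1 σ = ∑ i, σ.submatrix (Prod.mk i) (Prod.mk i) := by
      ext k l
      simp only [ptrace1, Matrix.sum_apply, submatrix_apply]
    exact this ▸ posSemidef_sum _ fun i _ => hσ.1.submatrix (Prod.mk i)
  right := by
    rw [← hσ.2]
    simp only [trace, ptrace1, diag_apply, Fintype.sum_prod_type_right]

variable [DecidableEq n]

lemma IsDensityMatrix.sum_eigenvalues {ρ : Matrix n n ℂ} (hρ : IsDensityMatrix ρ) :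
    ∑ i, hρ.1.isHermitian.eigenvalues i = 1 := by
  have := hρ.1.isHermitian.trace_eq_sum_eigenvalues.symm.trans hρ.2
  exact Complex.ofReal_injective (by simpa using this)

lemma IsDensityMatrix.vnEntropy_nonneg {ρ : Matrix n n ℂ} (hρ : IsDensityMatrix ρ) :
    0 ≤ vnEntropy ρ := by
  rw [vnEntropy_eq_sum_negMulLog_eigenvalues hρ.1.isHermitian]
  refine Finset.sum_nonneg fun i _ => negMulLog_nonneg (hρ.1.eigenvalues_nonneg i) ?_
  rw [← hρ.sum_eigenvalues]
  exact Finset.single_le_sum (fun j _ => hρ.1.eigenvalues_nonneg j) (Finset.mem_univ i)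

variable [DecidableEq m]

lemma IsDensityMatrix.vnEntropy_kronecker {ρ : Matrix m m ℂ} {τ : Matrix n n ℂ}
    (hρ : IsDensityMatrix ρ) (hτ : IsDensityMatrix τ) :
    vnEntropy (ρ ⊗ₖ τ) = vnEntropy ρ + vnEntropy τ := by
  have hρH := hρ.1.isHermitian
  have hτH := hτ.1.isHermitian
  set U := (hρH.eigenvectorUnitary : Matrix m m ℂ)
  set V := (hτH.eigenvectorUnitary : Matrix n n ℂ)
  have hdiag : diagonal (fun ij : m × n => ((hρH.eigenvalues ij.1 * hτH.eigenvalues ij.2 : ℝ) : ℂ))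
      = diagonal (fun i => (hρH.eigenvalues i : ℂ))
        ⊗ₖ diagonal (fun j => (hτH.eigenvalues j : ℂ)) := by
    simp only [diagonal_kronecker_diagonal, Complex.ofReal_mul]
  have hspectral : ρ ⊗ₖ τ = (U ⊗ₖ V)
      * diagonal (fun ij => ((hρH.eigenvalues ij.1 * hτH.eigenvalues ij.2 : ℝ) : ℂ))
      * (U ⊗ₖ V)ᴴ := by
    rw [hdiag, conjTranspose_kronecker, ← mul_kronecker_mul,
      ← mul_kronecker_mul, eigenvectorUnitary_mul_diagonal_mul,
      eigenvectorUnitary_mul_diagonal_mul]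
  rw [hspectral, vnEntropy_unitary_conj_diagonal
      (kronecker_mem_unitary hρH.eigenvectorUnitary.2 hτH.eigenvectorUnitary.2),
    sum_negMulLog_mul hρ.sum_eigenvalues hτ.sum_eigenvalues,
    vnEntropy_eq_sum_negMulLog_eigenvalues hρH, vnEntropy_eq_sum_negMulLog_eigenvalues hτH]

end DensityMatrix

section Kraus

variable {n X : Type*} [Fintype n] [Fintype X]

/-- The completely positive map `A ↦ ∑ₓ Kₓ A Kₓ†` with Kraus operators `K`. -/
def krausMap (K : X → Matrix n n ℂ) (A : Matrix n n ℂ) : Matrix n n ℂ :=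
  ∑ x, K x * A * (K x)ᴴ

lemma krausMap_mul_right (K : X → Matrix n n ℂ) (U A : Matrix n n ℂ) :
    krausMap (fun x => K x * U) A = krausMap K (U * A * Uᴴ) := by
  simp only [krausMap, conjTranspose_mul, Matrix.mul_assoc]

lemma krausMap_mul_left (U : Matrix n n ℂ) (K : X → Matrix n n ℂ) (A : Matrix n n ℂ) :
    krausMap (fun x => U * K x) A = U * krausMap K A * Uᴴ := by
  simp only [krausMap, conjTranspose_mul, Matrix.mul_assoc, Finset.mul_sum, Finset.sum_mul]

lemma posSemidef_krausMap (K : X → Matrix n n ℂ) {A : Matrix n n ℂ} (hA : A.PosSemidef) :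
    (krausMap K A).PosSemidef :=
  posSemidef_sum _ fun x _ => hA.mul_mul_conjTranspose_same (K x)

/-- The transition matrix `D i j = ∑ₓ |⟨i|Kₓ|j⟩|²` of the classical channel obtained from the Kraus
operators `K` by preparing and measuring in the standard basis. -/
def transitionMatrix (K : X → Matrix n n ℂ) : Matrix n n ℝ :=
  fun i j => ∑ x, Complex.normSq (K x i j)

lemma krausMap_diagonal_apply_self [DecidableEq n] (K : X → Matrix n n ℂ) (p : n → ℝ) (i : n) :
    krausMap K (diagonal fun j => (p j : ℂ)) i i = ((transitionMatrix K *ᵥ p) i : ℝ) := by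
  simp only [krausMap, transitionMatrix, Matrix.sum_apply, mulVec, dotProduct, mul_apply (N := _ᴴ),
    mul_diagonal, conjTranspose_apply, Complex.ofReal_sum, Complex.ofReal_mul, Finset.sum_mul,
    ← Complex.mul_conj, Complex.star_def]
  rw [Finset.sum_comm]
  exact Finset.sum_congr rfl fun j _ => Finset.sum_congr rfl fun x _ => by ring

variable [DecidableEq n]

/-- The Kraus operators `K` define a unital channel, i.e. `krausMap K` preserves both the trace and
the identity. -/
structure IsUnitalChannel (K : X → Matrix n n ℂ) : Prop where
  sum_conjTranspose_mul_self : ∑ x, (K x)ᴴ * K x = 1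
  sum_mul_conjTranspose_self : ∑ x, K x * (K x)ᴴ = 1

namespace IsUnitalChannel

variable {K : X → Matrix n n ℂ} {U ρ : Matrix n n ℂ}

lemma of_projections (hherm : ∀ x, (K x).IsHermitian) (hidem : ∀ x, K x * K x = K x)
    (hsum : ∑ x, K x = 1) : IsUnitalChannel K where
  sum_conjTranspose_mul_self := by simp only [(hherm _).eq, hidem, hsum]
  sum_mul_conjTranspose_self := by simp only [(hherm _).eq, hidem, hsum]

lemma of_unitary (hU : U ∈ unitaryGroup n ℂ) : IsUnitalChannel fun _ : Unit => U where
  sum_conjTranspose_mul_self := by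
    simpa only [Fintype.sum_unique, ← star_eq_conjTranspose] using mem_unitaryGroup_iff'.1 hU
  sum_mul_conjTranspose_self := by
    simpa only [Fintype.sum_unique, ← star_eq_conjTranspose] using mem_unitaryGroup_iff.1 hU

lemma one_kronecker {m : Type*} [Fintype m] [DecidableEq m] (hK : IsUnitalChannel K) :
    IsUnitalChannel fun x => (1 : Matrix m m ℂ) ⊗ₖ K x where
  sum_conjTranspose_mul_self := by
    simp only [conjTranspose_kronecker, conjTranspose_one, ← mul_kronecker_mul, Matrix.one_mul]
    rw [← one_kronecker_one, ← hK.sum_conjTranspose_mul_self]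
    exact (map_sum (kroneckerBilinear (R := ℂ) (1 : Matrix m m ℂ)) _ _).symm
  sum_mul_conjTranspose_self := by
    simp only [conjTranspose_kronecker, conjTranspose_one, ← mul_kronecker_mul, Matrix.one_mul]
    rw [← one_kronecker_one, ← hK.sum_mul_conjTranspose_self]
    exact (map_sum (kroneckerBilinear (R := ℂ) (1 : Matrix m m ℂ)) _ _).symm

protected lemma conjTranspose (hK : IsUnitalChannel K) : IsUnitalChannel fun x => (K x)ᴴ where
  sum_conjTranspose_mul_self := by
    simpa only [conjTranspose_conjTranspose] using hK.sum_mul_conjTranspose_self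
  sum_mul_conjTranspose_self := by
    simpa only [conjTranspose_conjTranspose] using hK.sum_conjTranspose_mul_self

lemma mul_unitary (hK : IsUnitalChannel K) (hU : U ∈ unitaryGroup n ℂ) :
    IsUnitalChannel fun x => K x * U where
  sum_conjTranspose_mul_self := by
    calc ∑ x, (K x * U)ᴴ * (K x * U) = Uᴴ * (∑ x, (K x)ᴴ * K x) * U := by
          simp only [conjTranspose_mul, Matrix.mul_assoc, Finset.mul_sum, Finset.sum_mul]
      _ = 1 := by
          rw [hK.sum_conjTranspose_mul_self, Matrix.mul_one]
          exact mem_unitaryGroup_iff'.1 hU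
  sum_mul_conjTranspose_self := by
    have hUU : U * Uᴴ = 1 := mem_unitaryGroup_iff.1 hU
    simpa only [conjTranspose_mul, Matrix.mul_assoc, ← Matrix.mul_assoc U, hUU, Matrix.one_mul]
      using hK.sum_mul_conjTranspose_self

lemma unitary_mul (hK : IsUnitalChannel K) (hU : U ∈ unitaryGroup n ℂ) :
    IsUnitalChannel fun x => U * K x := by
  simpa only [conjTranspose_mul, star_eq_conjTranspose, conjTranspose_conjTranspose] using
    (hK.conjTranspose.mul_unitary (Unitary.star_mem hU)).conjTranspose

lemma isDensityMatrix_krausMap (hK : IsUnitalChannel K) (hρ : IsDensityMatrix ρ) :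
    IsDensityMatrix (krausMap K ρ) where
  left := posSemidef_krausMap K hρ.1
  right := by
    calc (krausMap K ρ).trace = ((∑ x, (K x)ᴴ * K x) * ρ).trace := by
          simp only [krausMap, trace_sum, Finset.sum_mul, trace_mul_cycle (K _) ρ]
      _ = 1 := by rw [hK.sum_conjTranspose_mul_self, Matrix.one_mul, hρ.2]

lemma transitionMatrix_mem_doublyStochastic (hK : IsUnitalChannel K) :
    transitionMatrix K ∈ doublyStochastic ℝ n := by
  refine mem_doublyStochastic_iff_sum.2
    ⟨fun i j => Finset.sum_nonneg fun x _ => Complex.normSq_nonneg _, fun i => ?_, fun j => ?_⟩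
  · have := congrFun₂ hK.sum_mul_conjTranspose_self i i
    simp only [Matrix.sum_apply, mul_apply, conjTranspose_apply, one_apply_eq, Complex.star_def,
      Complex.mul_conj] at this
    rw [Finset.sum_comm] at this
    exact_mod_cast this
  · have := congrFun₂ hK.sum_conjTranspose_mul_self j j
    simp only [Matrix.sum_apply, mul_apply, conjTranspose_apply, one_apply_eq, Complex.star_def,
      ← Complex.normSq_eq_conj_mul_self] at this
    rw [Finset.sum_comm] at this
    exact_mod_cast this

lemma vnEntropy_le_sum_negMulLog_diag (hK : IsUnitalChannel K) (hρ : ρ.PosSemidef) :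
    vnEntropy ρ ≤ ∑ i, negMulLog (krausMap K ρ i i).re := by
  have hρH := hρ.isHermitian
  set V := (hρH.eigenvectorUnitary : Matrix n n ℂ)
  set p := hρH.eigenvalues
  have hdiag (i : n) : krausMap K ρ i i = ((transitionMatrix (fun x => K x * V) *ᵥ p) i : ℝ) := by
    rw [← krausMap_diagonal_apply_self, krausMap_mul_right, eigenvectorUnitary_mul_diagonal_mul]
  simp only [hdiag, Complex.ofReal_re, vnEntropy_eq_sum_negMulLog_eigenvalues hρH]
  exact sum_negMulLog_le_sum_negMulLog_mulVec
    (hK.mul_unitary hρH.eigenvectorUnitary.2).transitionMatrix_mem_doublyStochastic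
    hρ.eigenvalues_nonneg

lemma vnEntropy_le_vnEntropy_krausMap (hK : IsUnitalChannel K) (hρ : ρ.PosSemidef) :
    vnEntropy ρ ≤ vnEntropy (krausMap K ρ) := by
  have hσH := (posSemidef_krausMap K hρ).isHermitian
  have hE := Unitary.star_mem hσH.eigenvectorUnitary.2
  have := (hK.unitary_mul hE).vnEntropy_le_sum_negMulLog_diag hρ
  simpa only [krausMap_mul_left, star_eq_conjTranspose, conjTranspose_conjTranspose,
    eigenvectorUnitary_conjTranspose_mul_mul hσH, diagonal_apply_eq, Complex.ofReal_re,
    ← vnEntropy_eq_sum_negMulLog_eigenvalues hσH] using this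

end IsUnitalChannel

end Kraus

section PartialTrace

variable {m n : Type*}

lemma isHermitian_ptrace1 [Fintype m] {σ : Matrix (m × n) (m × n) ℂ} (hσ : σ.IsHermitian) :
    (ptrace1 σ).IsHermitian := by
  ext k l
  simp only [ptrace1, conjTranspose_apply, star_sum, hσ.apply]

lemma isHermitian_ptrace2 [Fintype n] {σ : Matrix (m × n) (m × n) ℂ} (hσ : σ.IsHermitian) :
    (ptrace2 σ).IsHermitian := by
  ext i j
  simp only [ptrace2, conjTranspose_apply, star_sum, hσ.apply]

variable [Fintype m] [Fintype n]

lemma trace_mul_kronecker_one [DecidableEq n] (σ : Matrix (m × n) (m × n) ℂ) (M : Matrix m m ℂ) :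
    (σ * (M ⊗ₖ (1 : Matrix n n ℂ))).trace = (ptrace2 σ * M).trace := by
  simp only [trace, diag_apply, mul_apply, ptrace2, Fintype.sum_prod_type, kroneckerMap_apply,
    one_apply, mul_ite, mul_one, mul_zero, Finset.sum_ite_eq', Finset.mem_univ, if_true,
    Finset.sum_mul]
  exact Finset.sum_congr rfl fun i _ => Finset.sum_comm

lemma trace_mul_one_kronecker [DecidableEq m] (σ : Matrix (m × n) (m × n) ℂ) (N : Matrix n n ℂ) :
    (σ * ((1 : Matrix m m ℂ) ⊗ₖ N)).trace = (ptrace1 σ * N).trace := by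
  simp only [trace, diag_apply, mul_apply, ptrace1, Fintype.sum_prod_type_right,
    kroneckerMap_apply, one_apply, ite_mul, mul_ite, one_mul, zero_mul, mul_zero,
    Finset.sum_ite_eq', Finset.mem_univ, if_true, Finset.sum_mul]
  exact Finset.sum_congr rfl fun k _ => Finset.sum_comm

lemma ptrace2_kronecker_conj [DecidableEq n] (σ : Matrix (m × n) (m × n) ℂ) (A : Matrix m m ℂ)
    {B : Matrix n n ℂ} (hB : B ∈ unitaryGroup n ℂ) :
    ptrace2 ((A ⊗ₖ B)ᴴ * σ * (A ⊗ₖ B)) = Aᴴ * ptrace2 σ * A := by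
  have hBB : B * Bᴴ = 1 := mem_unitaryGroup_iff.1 hB
  refine ext_iff_trace_mul_right.2 fun M => ?_
  calc (ptrace2 ((A ⊗ₖ B)ᴴ * σ * (A ⊗ₖ B)) * M).trace
      = (σ * ((A ⊗ₖ B) * (M ⊗ₖ 1) * (A ⊗ₖ B)ᴴ)).trace := by
        rw [← trace_mul_kronecker_one]
        simp only [Matrix.mul_assoc]
        rw [trace_mul_comm]
        simp only [Matrix.mul_assoc]
    _ = (σ * ((A * M * Aᴴ) ⊗ₖ 1)).trace := by
        simp only [conjTranspose_kronecker, ← mul_kronecker_mul, Matrix.mul_one, hBB]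
    _ = (Aᴴ * ptrace2 σ * A * M).trace := by
        rw [trace_mul_kronecker_one, ← Matrix.mul_assoc, trace_mul_comm]
        simp only [Matrix.mul_assoc]

lemma ptrace1_kronecker_conj [DecidableEq m] (σ : Matrix (m × n) (m × n) ℂ) {A : Matrix m m ℂ}
    (hA : A ∈ unitaryGroup m ℂ) (B : Matrix n n ℂ) :
    ptrace1 ((A ⊗ₖ B)ᴴ * σ * (A ⊗ₖ B)) = Bᴴ * ptrace1 σ * B := by
  have hAA : A * Aᴴ = 1 := mem_unitaryGroup_iff.1 hA
  refine ext_iff_trace_mul_right.2 fun M => ?_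
  calc (ptrace1 ((A ⊗ₖ B)ᴴ * σ * (A ⊗ₖ B)) * M).trace
      = (σ * ((A ⊗ₖ B) * (1 ⊗ₖ M) * (A ⊗ₖ B)ᴴ)).trace := by
        rw [← trace_mul_one_kronecker]
        simp only [Matrix.mul_assoc]
        rw [trace_mul_comm]
        simp only [Matrix.mul_assoc]
    _ = (σ * (1 ⊗ₖ (B * M * Bᴴ))).trace := by
        simp only [conjTranspose_kronecker, ← mul_kronecker_mul, Matrix.mul_one, hAA]
    _ = (Bᴴ * ptrace1 σ * B * M).trace := by
        rw [trace_mul_one_kronecker, ← Matrix.mul_assoc, trace_mul_comm]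
        simp only [Matrix.mul_assoc]

lemma IsDensityMatrix.vnEntropy_le_add_ptrace [DecidableEq m] [DecidableEq n]
    {σ : Matrix (m × n) (m × n) ℂ} (hσ : IsDensityMatrix σ) :
    vnEntropy σ ≤ vnEntropy (ptrace2 σ) + vnEntropy (ptrace1 σ) := by
  have h₁ := isHermitian_ptrace2 hσ.1.isHermitian
  have h₂ := isHermitian_ptrace1 hσ.1.isHermitian
  set A := (h₁.eigenvectorUnitary : Matrix m m ℂ)
  set B := (h₂.eigenvectorUnitary : Matrix n n ℂ)
  set τ := (A ⊗ₖ B)ᴴ * σ * (A ⊗ₖ B) with hτ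
  have hchannel : IsUnitalChannel fun _ : Unit => (A ⊗ₖ B)ᴴ := .of_unitary <|
    Unitary.star_mem (kronecker_mem_unitary h₁.eigenvectorUnitary.2 h₂.eigenvectorUnitary.2)
  have hτ_eq : krausMap (fun _ : Unit => (A ⊗ₖ B)ᴴ) σ = τ := by
    simp only [krausMap, Fintype.sum_unique, conjTranspose_conjTranspose, hτ]
  have hτ_density : IsDensityMatrix τ := hτ_eq ▸ hchannel.isDensityMatrix_krausMap hσ
  have hleft (i : m) : ∑ k, (τ (i, k) (i, k)).re = h₁.eigenvalues i := by
    rw [← Complex.re_sum]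
    change (ptrace2 τ i i).re = _
    rw [ptrace2_kronecker_conj σ A h₂.eigenvectorUnitary.2,
      eigenvectorUnitary_conjTranspose_mul_mul, diagonal_apply_eq, Complex.ofReal_re]
  have hright (k : n) : ∑ i, (τ (i, k) (i, k)).re = h₂.eigenvalues k := by
    rw [← Complex.re_sum]
    change (ptrace1 τ k k).re = _
    rw [ptrace1_kronecker_conj σ h₁.eigenvectorUnitary.2 B,
      eigenvectorUnitary_conjTranspose_mul_mul, diagonal_apply_eq, Complex.ofReal_re]
  have hsum : ∑ ik, (τ ik ik).re = 1 := by
    rw [← Complex.re_sum]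
    exact (congrArg Complex.re hτ_density.2).trans Complex.one_re
  calc vnEntropy σ ≤ ∑ ik, negMulLog (τ ik ik).re :=
        hτ_eq ▸ hchannel.vnEntropy_le_sum_negMulLog_diag hσ.1
    _ ≤ ∑ i, negMulLog (∑ k, (τ (i, k) (i, k)).re)
          + ∑ k, negMulLog (∑ i, (τ (i, k) (i, k)).re) :=
        sum_negMulLog_le_add_marginals
          (fun ik => (Complex.nonneg_iff.1 hτ_density.1.diag_nonneg).1) hsum
    _ = vnEntropy (ptrace2 σ) + vnEntropy (ptrace1 σ) := by
        simp only [hleft, hright, vnEntropy_eq_sum_negMulLog_eigenvalues h₁,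
          vnEntropy_eq_sum_negMulLog_eigenvalues h₂]

end PartialTrace

theorem cycle_entropy_balance_general
    {W S D X : Type*} [Fintype W] [DecidableEq W] [Fintype S] [DecidableEq S]
    [Fintype D] [DecidableEq D] [Fintype X]
    {ρW : Matrix W W ℂ} (hρW : IsDensityMatrix ρW)
    {ρS : Matrix S S ℂ} (hρS : IsDensityMatrix ρS)
    {ρD : Matrix D D ℂ} (hρD : IsDensityMatrix ρD)
    {K : X → Matrix (W × S × D) (W × S × D) ℂ} (hK : IsUnitalChannel K)
    {σ : Matrix (W × S × D) (W × S × D) ℂ} (hσ : σ = krausMap K (ρW ⊗ₖ (ρS ⊗ₖ ρD))) :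
    vnEntropy ρW + vnEntropy ρS + vnEntropy ρD
      ≤ vnEntropy (ptrace2 σ) + vnEntropy (ptrace2 (ptrace1 σ))
        + vnEntropy (ptrace1 (ptrace1 σ)) := by
  have hρSD := hρS.kronecker hρD
  have hρ := hρW.kronecker hρSD
  have hσ_density : IsDensityMatrix σ := hσ ▸ hK.isDensityMatrix_krausMap hρ
  calc vnEntropy ρW + vnEntropy ρS + vnEntropy ρD
      = vnEntropy (ρW ⊗ₖ (ρS ⊗ₖ ρD)) := by
        rw [hρW.vnEntropy_kronecker hρSD, hρS.vnEntropy_kronecker hρD, add_assoc]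
    _ ≤ vnEntropy σ := hσ ▸ hK.vnEntropy_le_vnEntropy_krausMap hρ.1
    _ ≤ vnEntropy (ptrace2 σ) + vnEntropy (ptrace1 σ) := hσ_density.vnEntropy_le_add_ptrace
    _ ≤ vnEntropy (ptrace2 σ)
          + (vnEntropy (ptrace2 (ptrace1 σ)) + vnEntropy (ptrace1 (ptrace1 σ))) := by
        gcongr
        exact (isDensityMatrix_ptrace1 hσ_density).vnEntropy_le_add_ptrace
    _ = _ := (add_assoc ..).symm

/-- Eq. (49): subadditivity entropy balance after premeasurement,
objectification and feedback of one engine cycle. -/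
theorem cycle_entropy_balance
    {dW dS dD : ℕ} {X : Type*} [Fintype X]
    (ρW : Matrix (Fin dW) (Fin dW) ℂ) (hρW : IsDensityMatrix ρW)
    (ρS : Matrix (Fin dS) (Fin dS) ℂ) (hρS : IsDensityMatrix ρS)
    (ψ : Fin dD → ℂ) (hψ : star ψ ⬝ᵥ ψ = 1)
    (G : Matrix (Fin dW × Fin dS × Fin dD) (Fin dW × Fin dS × Fin dD) ℂ)
    (hG : G ∈ Matrix.unitaryGroup (Fin dW × Fin dS × Fin dD) ℂ)
    (P : X → Matrix (Fin dD) (Fin dD) ℂ)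
    (hPherm : ∀ x, (P x).IsHermitian)
    (hPidem : ∀ x, P x * P x = P x)
    (hPorth : ∀ x y, x ≠ y → P x * P y = 0)
    (hPsum : ∑ x, P x = 1)
    (σ : Matrix (Fin dW × Fin dS × Fin dD) (Fin dW × Fin dS × Fin dD) ℂ)
    (hσ : σ = ∑ x, ((1 : Matrix (Fin dW) (Fin dW) ℂ) ⊗ₖ
            ((1 : Matrix (Fin dS) (Fin dS) ℂ) ⊗ₖ P x))
        * (G * (ρW ⊗ₖ (ρS ⊗ₖ outer ψ)) * Gᴴ)
        * ((1 : Matrix (Fin dW) (Fin dW) ℂ) ⊗ₖ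
            ((1 : Matrix (Fin dS) (Fin dS) ℂ) ⊗ₖ P x))) :
    vnEntropy ρW + vnEntropy ρS
      ≤ vnEntropy (ptrace2 σ) + vnEntropy (ptrace2 (ptrace1 σ))
        + vnEntropy (ptrace1 (ptrace1 σ)) := by
  have hρD := isDensityMatrix_outer hψ
  have hK := (IsUnitalChannel.of_projections hPherm hPidem hPsum).one_kronecker (m := Fin dS)
    |>.one_kronecker (m := Fin dW) |>.mul_unitary hG
  have hσ_eq : σ = krausMap (fun x => 1 ⊗ₖ (1 ⊗ₖ P x) * G) (ρW ⊗ₖ (ρS ⊗ₖ outer ψ)) := by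
    rw [krausMap_mul_right]
    simp only [hσ, krausMap, conjTranspose_kronecker, conjTranspose_one, (hPherm _).eq]
  exact (le_add_of_nonneg_right hρD.vnEntropy_nonneg).trans
    (cycle_entropy_balance_general hρW hρS hρD hK hσ_eq)
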